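/- Let n ≥ 1 and f : Fin n → R := MvPolynomial ℂ (Fin 2), and set F := ∏ i, f i. Assume that for every i the quotient A ⧸ Ideal.span {ι(f i), ι(v_{f i})} is a finite-dimensional ℂ-vector space, and that for all i ≠ j the quotient A ⧸ Ideal.span {ι(f i), ι(f j)} is a finite-dimensional ℂ-vector space. Then A ⧸ Ideal.span {ι F, ι(v_F)} is finite-dimensional and m₀(F, v_F) = (∑ i, m₀(f i, v_{f i})) + 12·(∑_{i < j} m₀(f i, f j)). -/

import Mathlib

open MvPolynomial

noncomputable section

/-- Partial derivative with respect to the first variable `X`. -/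
def dx (f : MvPolynomial (Fin 2) ℂ) : MvPolynomial (Fin 2) ℂ := pderiv 0 f

/-- Partial derivative with respect to the second variable `Y`. -/
def dy (f : MvPolynomial (Fin 2) ℂ) : MvPolynomial (Fin 2) ℂ := pderiv 1 f

/-- The inflection polynomial `i_f = f_y²·f_xx − 2·f_x·f_y·f_xy + f_x²·f_yy`. -/
def infl (f : MvPolynomial (Fin 2) ℂ) : MvPolynomial (Fin 2) ℂ :=
  (dy f) ^ 2 * dx (dx f) - 2 * dx f * dy f * dy (dx f) + (dx f) ^ 2 * dy (dy f)

/-- The vertex polynomial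
`v_f = (f_x² + f_y²)(f_x³ f_yyy − 3 f_x² f_y f_xyy + 3 f_x f_y² f_xxy − f_y³ f_xxx)
      − 3((f_x² − f_y²) f_xy − f_x f_y (f_xx − f_yy)) · i_f`. -/
def vert (f : MvPolynomial (Fin 2) ℂ) : MvPolynomial (Fin 2) ℂ :=
  ((dx f) ^ 2 + (dy f) ^ 2) *
      ((dx f) ^ 3 * dy (dy (dy f)) - 3 * (dx f) ^ 2 * dy f * dy (dy (dx f)) +
        3 * dx f * (dy f) ^ 2 * dy (dx (dx f)) - (dy f) ^ 3 * dx (dx (dx f))) -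
    3 * (((dx f) ^ 2 - (dy f) ^ 2) * dy (dx f) - dx f * dy f * (dx (dx f) - dy (dy f))) *
      infl f

/-- The canonical map from polynomials to formal power series in two variables. -/
def ι : MvPolynomial (Fin 2) ℂ →+* MvPowerSeries (Fin 2) ℂ :=
  MvPolynomial.coeToMvPowerSeries.ringHom

/-- The local intersection number at the origin of the curves `g = 0` and `h = 0`:
the `ℂ`-dimension of `ℂ⟦x,y⟧/⟨g,h⟩`. -/
def interMult (g h : MvPolynomial (Fin 2) ℂ) : ℕ :=
  Module.finrank ℂ (MvPowerSeries (Fin 2) ℂ ⧸ Ideal.span {ι g, ι h})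

end

/-!
Write `∇f = (f_x, f_y)` and let `D_f = f_x ∂_y - f_y ∂_x` be the derivation along the level curves
of `f`. Then `i_f = f_x D_f f_y - f_y D_f f_x` and
`v_f = |∇f|² D_f i_f - 3 (f_x D_f f_x + f_y D_f f_y) i_f`. Modulo `f` one has `∇(fg) ≡ g ∇f` and
`D_{fg} ≡ g D_f`, and `D_f` preserves congruences modulo `f` because `D_f f = 0`. Hence
`i_{fg} ≡ g³ i_f`, and in `v_{fg}` the terms containing `D_f g` cancel, leaving
`v_{fg} ≡ g⁶ v_f`. Intersection numbers are additive in each argument, so the branch `f_i` meets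
`v_F` with multiplicity `V_{f_i} + 6 ∑_{j ≠ i} m(f_i, f_j)`; summing over `i` counts each unordered
pair twice. Additivity itself rests on the fact that two power series in two variables with
finite-dimensional quotient form a regular sequence.
-/

open scoped nonZeroDivisors Pointwise

section ExactSequences

theorem finrank_eq_add_of_exact {k U V W : Type*} [DivisionRing k] [AddCommGroup U] [Module k U]
    [AddCommGroup V] [Module k V] [AddCommGroup W] [Module k W] [FiniteDimensional k V]
    {φ : U →ₗ[k] V} {ψ : V →ₗ[k] W} (hφ : Function.Injective φ) (hψ : Function.Surjective ψ)
    (h : Function.Exact φ ψ) :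
    Module.finrank k V = Module.finrank k W + Module.finrank k U := by
  rw [← ψ.finrank_range_add_finrank_ker, h.linearMap_ker_eq, LinearMap.finrank_range_of_inj hφ,
    LinearMap.range_eq_top.2 hψ, finrank_top]

variable {R : Type*} [CommRing R]

theorem smul_span_singleton (b c : R) : b • Ideal.span {c} = Ideal.span {b * c} := by
  rw [← Ideal.submodule_span_eq, ← Ideal.submodule_span_eq, Submodule.smul_span,
    Set.smul_set_singleton, smul_eq_mul]

theorem finite_quotient_span_mul {k : Type*} [CommRing k] [Algebra k R] {b c : R}
    [Module.Finite k (R ⧸ Ideal.span {b})] [Module.Finite k (R ⧸ Ideal.span {c})] :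
    Module.Finite k (R ⧸ Ideal.span {b * c}) := by
  rw [← smul_span_singleton]
  exact Module.Finite.of_exact (f := (Ideal.mulQuot b (Ideal.span {c})).restrictScalars k)
    (g := (Ideal.quotOfMul b (Ideal.span {c})).restrictScalars k)
    (Ideal.exact_mulQuot_quotOfMul _) (Ideal.quotOfMul_surjective _)

theorem finrank_quotient_span_mul {k : Type*} [Field k] [Algebra k R] {b c : R} (hb : b ∈ R⁰)
    [FiniteDimensional k (R ⧸ Ideal.span {b})] [FiniteDimensional k (R ⧸ Ideal.span {c})] :
    Module.finrank k (R ⧸ Ideal.span {b * c}) =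
      Module.finrank k (R ⧸ Ideal.span {b}) + Module.finrank k (R ⧸ Ideal.span {c}) := by
  have := finite_quotient_span_mul (k := k) (b := b) (c := c)
  rw [← smul_span_singleton] at this ⊢
  exact finrank_eq_add_of_exact (φ := (Ideal.mulQuot b (Ideal.span {c})).restrictScalars k)
    (ψ := (Ideal.quotOfMul b (Ideal.span {c})).restrictScalars k)
    (Ideal.mulQuot_injective _ hb) (Ideal.quotOfMul_surjective _) (Ideal.exact_mulQuot_quotOfMul _)

end ExactSequences

section RegularSequences

theorem mk_mem_nonZeroDivisors_of_mem_span_pair {A : Type*} [CommRing A] [IsDomain A]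
    {a b x y : A} (hx₀ : x ≠ 0) (hx : x ∈ Ideal.span {a, b}) (hy : y ∈ Ideal.span {a, b})
    (hxy : ∀ w, x ∣ y * w → x ∣ w) :
    Ideal.Quotient.mk (Ideal.span {a}) b ∈ (A ⧸ Ideal.span {a})⁰ := by
  rw [mem_nonZeroDivisors_iff_right]
  intro ubar hubar
  obtain ⟨u, rfl⟩ := Ideal.Quotient.mk_surjective ubar
  rw [← map_mul, Ideal.Quotient.eq_zero_iff_dvd] at hubar
  rw [Ideal.Quotient.eq_zero_iff_dvd]
  obtain ⟨v, hv⟩ := hubar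
  obtain ⟨p, q, rfl⟩ := Ideal.mem_span_pair.1 hx
  obtain ⟨r, s, rfl⟩ := Ideal.mem_span_pair.1 hy
  rcases eq_or_ne a 0 with rfl | ha
  · have hb : b ≠ 0 := by rintro rfl; simp at hx₀
    simpa [hb] using hv
  -- With `x = p a + q b` and `y = r a + s b`, one has `x u = a (p u + q v)`, `y u = a (r u + s v)`.
  obtain ⟨w, hw⟩ := hxy (p * u + q * v)
    ⟨r * u + s * v, mul_left_cancel₀ ha (by linear_combination (s * p * a - r * a * q) * hv)⟩
  exact ⟨w, mul_left_cancel₀ hx₀ (by linear_combination a * hw + q * hv)⟩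

variable {σ k : Type*}

theorem X_pow_dvd_of_dvd_X_pow_mul [CommSemiring k] {s t : σ} (hst : s ≠ t) {M N : ℕ}
    {w : MvPowerSeries σ k} (h : MvPowerSeries.X s ^ N ∣ MvPowerSeries.X t ^ M * w) :
    MvPowerSeries.X s ^ N ∣ w := by
  rw [MvPowerSeries.X_pow_dvd_iff] at h ⊢
  intro m hm
  have hcoeff := h (Finsupp.single t M + m) (by simpa [hst] using hm)
  rwa [MvPowerSeries.X_pow_eq, MvPowerSeries.coeff_add_monomial_mul, one_mul] at hcoeff

variable [Field k]

theorem exists_X_pow_mem (I : Ideal (MvPowerSeries σ k))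
    [FiniteDimensional k (MvPowerSeries σ k ⧸ I)] (s : σ) :
    ∃ N : ℕ, MvPowerSeries.X s ^ N ∈ I := by
  have : IsArtinianRing (MvPowerSeries σ k ⧸ I) := IsArtinianRing.of_finite k _
  obtain ⟨N, hN⟩ := IsLocalRing.exists_maximalIdeal_pow_le_of_isArtinianRing_quotient I
  have hX : MvPowerSeries.X s ∈ IsLocalRing.maximalIdeal (MvPowerSeries σ k) := by
    simp [MvPowerSeries.isUnit_iff_constantCoeff]
  exact ⟨N, hN (Ideal.pow_mem_pow hX N)⟩

theorem mk_mem_nonZeroDivisors_of_finite_quotient [Nontrivial σ] {a b : MvPowerSeries σ k}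
    [FiniteDimensional k (MvPowerSeries σ k ⧸ Ideal.span {a, b})] :
    Ideal.Quotient.mk (Ideal.span {a}) b ∈ (MvPowerSeries σ k ⧸ Ideal.span {a})⁰ := by
  obtain ⟨s, t, hst⟩ := exists_pair_ne σ
  obtain ⟨N, hN⟩ := exists_X_pow_mem (Ideal.span {a, b}) s
  obtain ⟨M, hM⟩ := exists_X_pow_mem (Ideal.span {a, b}) t
  have : IsDomain (MvPowerSeries σ k) := NoZeroDivisors.to_isDomain _
  have hX : (MvPowerSeries.X s : MvPowerSeries σ k) ≠ 0 := fun h ↦ by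
    simpa using congrArg (MvPowerSeries.coeff (Finsupp.single s 1)) h
  exact mk_mem_nonZeroDivisors_of_mem_span_pair (pow_ne_zero N hX) hN hM
    fun _ ↦ X_pow_dvd_of_dvd_X_pow_mul hst

end RegularSequences

/-- `A / (a, b)` as the quotient of `A / (a)` by the class of `b`, which reduces statements about
pairs of equations to principal ideals. -/
noncomputable def quotientSpanPairEquiv (k : Type*) {A : Type*} [CommRing k] [CommRing A]
    [Algebra k A] (a b : A) :
    (A ⧸ Ideal.span {a, b}) ≃ₗ[k]
      (A ⧸ Ideal.span {a}) ⧸ Ideal.span {Ideal.Quotient.mk (Ideal.span {a}) b} :=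
  ((Ideal.quotientEquivAlgOfEq k (Ideal.span_insert a {b})).trans
    ((DoubleQuot.quotQuotEquivQuotSupₐ k (Ideal.span {a}) (Ideal.span {b})).symm.trans
      (Ideal.quotientEquivAlgOfEq k (by simp [Ideal.map_span])))).toLinearEquiv

/-- `HasInterMult k a b m` says that the intersection number `dim_k A / (a, b)` is finite and equal
to `m`. Bundling the finiteness rules out the value `0` that `Module.finrank` takes on
infinite-dimensional quotients. -/
structure HasInterMult (k : Type*) {A : Type*} [Field k] [CommRing A] [Algebra k A] (a b : A)
    (m : ℕ) : Prop where
  finite : FiniteDimensional k (A ⧸ Ideal.span {a, b})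
  finrank_eq : Module.finrank k (A ⧸ Ideal.span {a, b}) = m

namespace HasInterMult

variable {k : Type*} [Field k]

section Algebra

variable {A : Type*} [CommRing A] [Algebra k A] {a b c : A} {m n : ℕ}

theorem symm (h : HasInterMult k a b m) : HasInterMult k b a m := by
  rcases h with ⟨hfin, hrank⟩
  rw [Ideal.span_pair_comm] at hfin hrank
  exact ⟨hfin, hrank⟩

theorem congr_right (h : HasInterMult k a b m) (hbc : a ∣ c - b) : HasInterMult k a c m := by
  obtain ⟨d, hd⟩ := hbc
  obtain rfl : c = b + a * d := by linear_combination hd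
  rcases h with ⟨hfin, hrank⟩
  rw [← Ideal.span_pair_add_left_mul a b d] at hfin hrank
  exact ⟨hfin, hrank⟩

theorem one_right (a : A) : HasInterMult k a 1 0 := by
  have htop : Ideal.span {a, 1} = ⊤ := (Ideal.eq_top_iff_one _).2 (Ideal.subset_span (by simp))
  have : Subsingleton (A ⧸ Ideal.span {a, 1}) := Ideal.Quotient.subsingleton_iff.2 htop
  exact ⟨inferInstance, Module.finrank_zero_of_subsingleton⟩

theorem mul_right_of_mem_nonZeroDivisors (hb : HasInterMult k a b m) (hc : HasInterMult k a c n)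
    (hreg : Ideal.Quotient.mk (Ideal.span {a}) b ∈ (A ⧸ Ideal.span {a})⁰) :
    HasInterMult k a (b * c) (m + n) := by
  obtain ⟨hbfin, rfl⟩ := hb
  obtain ⟨hcfin, rfl⟩ := hc
  let e := quotientSpanPairEquiv k a
  have := (e b).finiteDimensional
  have := (e c).finiteDimensional
  have hbc := e (b * c)
  rw [map_mul] at hbc
  have := finite_quotient_span_mul (k := k) (b := Ideal.Quotient.mk (Ideal.span {a}) b)
    (c := Ideal.Quotient.mk (Ideal.span {a}) c)
  refine ⟨hbc.symm.finiteDimensional, ?_⟩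
  rw [hbc.finrank_eq, finrank_quotient_span_mul hreg, (e b).finrank_eq, (e c).finrank_eq]

end Algebra

variable {σ : Type*} [Nontrivial σ] {a b c : MvPowerSeries σ k} {m n : ℕ}

theorem mul_right (hb : HasInterMult k a b m) (hc : HasInterMult k a c n) :
    HasInterMult k a (b * c) (m + n) :=
  have := hb.finite
  hb.mul_right_of_mem_nonZeroDivisors hc mk_mem_nonZeroDivisors_of_finite_quotient

theorem prod_right {α : Type*} {s : Finset α} {b : α → MvPowerSeries σ k} {m : α → ℕ}
    (h : ∀ i ∈ s, HasInterMult k a (b i) (m i)) :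
    HasInterMult k a (∏ i ∈ s, b i) (∑ i ∈ s, m i) := by
  classical
  induction s using Finset.induction_on with
  | empty => simpa using one_right a
  | insert i s hi ih =>
    rw [Finset.forall_mem_insert] at h
    rw [Finset.prod_insert hi, Finset.sum_insert hi]
    exact h.1.mul_right (ih h.2)

theorem pow_right (h : HasInterMult k a b m) (n : ℕ) : HasInterMult k a (b ^ n) (n * m) := by
  simpa using prod_right (s := Finset.range n) fun _ _ ↦ h

end HasInterMult

section VertexPolynomial

variable (f g p q : MvPolynomial (Fin 2) ℂ)

theorem dx_mul : dx (f * g) = f * dx g + g * dx f := by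
  simp [dx, Derivation.leibniz]

theorem dy_mul : dy (f * g) = f * dy g + g * dy f := by
  simp [dy, Derivation.leibniz]

theorem dx_dy : dx (dy f) = dy (dx f) := by
  have hbracket : ⁅pderiv (R := ℂ) (0 : Fin 2), pderiv (R := ℂ) (1 : Fin 2)⁆ = 0 := by
    apply MvPolynomial.derivation_ext
    intro i
    fin_cases i <;> simp [Derivation.commutator_apply, pderiv_X]
  simpa [dx, dy, Derivation.commutator_apply, sub_eq_zero] using DFunLike.congr_fun hbracket f

/-- The derivation `D_f = f_x ∂_y - f_y ∂_x` along the level curves of `f`. -/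
noncomputable def tangentDeriv :
    Derivation ℂ (MvPolynomial (Fin 2) ℂ) (MvPolynomial (Fin 2) ℂ) :=
  dx f • pderiv 1 - dy f • pderiv 0

theorem tangentDeriv_apply : tangentDeriv f p = dx f * dy p - dy f * dx p := rfl

theorem tangentDeriv_self : tangentDeriv f f = 0 := by
  rw [tangentDeriv_apply]
  ring

theorem tangentDeriv_mul : tangentDeriv f (p * q) = p * tangentDeriv f q + q * tangentDeriv f p :=
  (tangentDeriv f).leibniz p q

theorem infl_eq_tangentDeriv :
    infl f = dx f * tangentDeriv f (dy f) - dy f * tangentDeriv f (dx f) := by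
  simp only [infl, tangentDeriv_apply, dx_dy]
  ring

theorem vert_eq_tangentDeriv :
    vert f = (dx f ^ 2 + dy f ^ 2) * tangentDeriv f (infl f) -
      3 * (dx f * tangentDeriv f (dx f) + dy f * tangentDeriv f (dy f)) * infl f := by
  have htwo : tangentDeriv f 2 = 0 := (tangentDeriv f).map_natCast 2
  simp only [vert, infl, map_add, map_sub, tangentDeriv_mul, pow_two, htwo]
  simp only [tangentDeriv_apply, dx_dy]
  ring

variable {p q}

theorem dx_mul_smodEq : dx (f * g) ≡ g * dx f [SMOD Ideal.span {f}] := by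
  rw [SModEq.sub_mem, Ideal.mem_span_singleton]
  exact ⟨dx g, by rw [dx_mul]; ring⟩

theorem dy_mul_smodEq : dy (f * g) ≡ g * dy f [SMOD Ideal.span {f}] := by
  rw [SModEq.sub_mem, Ideal.mem_span_singleton]
  exact ⟨dy g, by rw [dy_mul]; ring⟩

theorem tangentDeriv_smodEq (h : p ≡ q [SMOD Ideal.span {f}]) :
    tangentDeriv f p ≡ tangentDeriv f q [SMOD Ideal.span {f}] := by
  rw [SModEq.sub_mem, Ideal.mem_span_singleton] at h ⊢
  obtain ⟨r, hr⟩ := h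
  exact ⟨tangentDeriv f r, by rw [← map_sub, hr, tangentDeriv_mul, tangentDeriv_self]; ring⟩

theorem tangentDeriv_mul_smodEq (h : p ≡ q [SMOD Ideal.span {f}]) :
    tangentDeriv (f * g) p ≡ g * tangentDeriv f q [SMOD Ideal.span {f}] :=
  calc tangentDeriv (f * g) p
    _ = dx (f * g) * dy p - dy (f * g) * dx p := tangentDeriv_apply _ _
    _ ≡ g * dx f * dy p - g * dy f * dx p [SMOD Ideal.span {f}] :=
      ((dx_mul_smodEq f g).mul .rfl).sub ((dy_mul_smodEq f g).mul .rfl)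
    _ = g * tangentDeriv f p := by rw [tangentDeriv_apply]; ring
    _ ≡ g * tangentDeriv f q [SMOD Ideal.span {f}] :=
      .mul .rfl (tangentDeriv_smodEq f h)

theorem infl_mul_smodEq : infl (f * g) ≡ g ^ 3 * infl f [SMOD Ideal.span {f}] := by
  have hx := dx_mul_smodEq f g
  have hy := dy_mul_smodEq f g
  rw [infl_eq_tangentDeriv (f * g)]
  calc dx (f * g) * tangentDeriv (f * g) (dy (f * g)) -
        dy (f * g) * tangentDeriv (f * g) (dx (f * g))
    _ ≡ g * dx f * (g * tangentDeriv f (g * dy f)) - g * dy f * (g * tangentDeriv f (g * dx f))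
        [SMOD Ideal.span {f}] :=
      (hx.mul (tangentDeriv_mul_smodEq f g hy)).sub (hy.mul (tangentDeriv_mul_smodEq f g hx))
    _ = g ^ 3 * infl f := by
      rw [infl_eq_tangentDeriv, tangentDeriv_mul, tangentDeriv_mul]
      ring

theorem vert_mul_smodEq : vert (f * g) ≡ g ^ 6 * vert f [SMOD Ideal.span {f}] := by
  have hx := dx_mul_smodEq f g
  have hy := dy_mul_smodEq f g
  have hi := infl_mul_smodEq f g
  have hDx := tangentDeriv_mul_smodEq f g hx
  have hDy := tangentDeriv_mul_smodEq f g hy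
  have hDi := tangentDeriv_mul_smodEq f g hi
  rw [vert_eq_tangentDeriv (f * g)]
  calc (dx (f * g) ^ 2 + dy (f * g) ^ 2) * tangentDeriv (f * g) (infl (f * g)) -
        3 * (dx (f * g) * tangentDeriv (f * g) (dx (f * g)) +
          dy (f * g) * tangentDeriv (f * g) (dy (f * g))) * infl (f * g)
    _ ≡ ((g * dx f) ^ 2 + (g * dy f) ^ 2) * (g * tangentDeriv f (g ^ 3 * infl f)) -
        3 * (g * dx f * (g * tangentDeriv f (g * dx f)) +
          g * dy f * (g * tangentDeriv f (g * dy f))) * (g ^ 3 * infl f)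
        [SMOD Ideal.span {f}] :=
      (((hx.pow 2).add (hy.pow 2)).mul hDi).sub
        ((SModEq.rfl.mul ((hx.mul hDx).add (hy.mul hDy))).mul hi)
    _ = g ^ 6 * vert f := by
      simp only [vert_eq_tangentDeriv f, tangentDeriv_mul, pow_succ, pow_zero, one_mul]
      ring

variable {f g}

theorem hasInterMult_vert_mul {m p : ℕ} (hf : HasInterMult ℂ (ι f) (ι (vert f)) m)
    (hg : HasInterMult ℂ (ι f) (ι g) p) :
    HasInterMult ℂ (ι f) (ι (vert (f * g))) (m + 6 * p) := by
  have hdvd : f ∣ vert (f * g) - g ^ 6 * vert f := by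
    simpa only [SModEq.sub_mem, Ideal.mem_span_singleton] using vert_mul_smodEq f g
  rw [add_comm]
  refine ((hg.pow_right 6).mul_right hf).congr_right ?_
  simpa only [map_sub, map_mul, map_pow] using map_dvd ι hdvd

end VertexPolynomial

theorem interMult_comm (g h : MvPolynomial (Fin 2) ℂ) : interMult g h = interMult h g := by
  rw [interMult, interMult, Ideal.span_pair_comm]

theorem sum_sum_erase_eq_two_nsmul_sum_sum_lt {α M : Type*} [Fintype α] [LinearOrder α]
    [AddCommMonoid M] {m : α → α → M} (hm : ∀ i j, m i j = m j i) :
    ∑ i, ∑ j ∈ Finset.univ.erase i, m i j =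
      2 • ∑ i, ∑ j ∈ Finset.univ.filter (fun j => i < j), m i j := by
  have hsplit (i : α) : ∑ j ∈ Finset.univ.erase i, m i j =
      ∑ j with i < j, m i j + ∑ j with j < i, m i j := by
    have herase : Finset.univ.erase i =
        Finset.univ.filter (i < ·) ∪ Finset.univ.filter (· < i) := by
      ext j
      simp [eq_comm, lt_or_lt_iff_ne]
    rw [herase, Finset.sum_union (Finset.disjoint_filter.2 fun _ _ ↦ lt_asymm)]
  have hswap : ∑ i, ∑ j with j < i, m i j = ∑ i, ∑ j with i < j, m i j := by
    rw [Finset.sum_comm' (t' := Finset.univ) (s' := fun j ↦ {i | j < i}) (by simp)]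
    simp only [hm]
  simp only [hsplit, Finset.sum_add_distrib, hswap, two_nsmul]

/-- **Theorem 3.3 (vertex part).** If `F = f₁ ⋯ f_n` where each `V_{f_i}` is finite
and the pairwise intersection numbers `m₀(f_i, f_j)` are finite, then `V_F` is finite
and `V_F = Σᵢ V_{f_i} + 12·Σ_{i<j} m₀(f_i, f_j)`. -/
theorem vertex_number_of_product
    (n : ℕ) (hn : 1 ≤ n) (f : Fin n → MvPolynomial (Fin 2) ℂ)
    (hV : ∀ i, FiniteDimensional ℂ
      (MvPowerSeries (Fin 2) ℂ ⧸ Ideal.span {ι (f i), ι (vert (f i))}))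
    (hm : ∀ i j, i ≠ j → FiniteDimensional ℂ
      (MvPowerSeries (Fin 2) ℂ ⧸ Ideal.span {ι (f i), ι (f j)})) :
    FiniteDimensional ℂ (MvPowerSeries (Fin 2) ℂ ⧸
        Ideal.span {ι (∏ i, f i), ι (vert (∏ i, f i))}) ∧
    interMult (∏ i, f i) (vert (∏ i, f i))
      = (∑ i, interMult (f i) (vert (f i)))
        + 12 * ∑ i, ∑ j ∈ Finset.univ.filter (fun j => i < j), interMult (f i) (f j) := by
  have hbranch (i : Fin n) : HasInterMult ℂ (ι (f i)) (ι (vert (∏ i, f i)))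
      (interMult (f i) (vert (f i)) + 6 * ∑ j ∈ Finset.univ.erase i, interMult (f i) (f j)) := by
    have hrest : HasInterMult ℂ (ι (f i)) (ι (∏ j ∈ Finset.univ.erase i, f j))
        (∑ j ∈ Finset.univ.erase i, interMult (f i) (f j)) := by
      rw [map_prod]
      exact .prod_right fun j hj ↦ ⟨hm i j (Finset.ne_of_mem_erase hj).symm, rfl⟩
    rw [← Finset.mul_prod_erase Finset.univ f (Finset.mem_univ i)]
    exact hasInterMult_vert_mul ⟨hV i, rfl⟩ hrest
  have htotal := (HasInterMult.prod_right (s := Finset.univ) fun i _ ↦ (hbranch i).symm).symm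
  rw [← map_prod, Finset.sum_add_distrib, ← Finset.mul_sum,
    sum_sum_erase_eq_two_nsmul_sum_sum_lt fun i j ↦ interMult_comm (f i) (f j), smul_eq_mul,
    ← mul_assoc] at htotal
  exact ⟨htotal.finite, htotal.finrank_eq⟩
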